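/- For every integer k ≥ 4 with k ≡ 0 (mod 4), the liminferior as n → ∞ of Φ_k(n) · log log n / n^k equals (2^{k/2}/(2^{k/2} − 1)) · ζ(k/2)^{−1} · e^{−γ}, where ζ is the Riemann zeta function and γ is the Euler–Mascheroni constant; that is, the minimal order of Φ_k(n) is (2^{k/2}/(2^{k/2} − 1)) ζ(k/2)^{−1} e^{−γ} n^k / log log n. -/

import Mathlib

/-!
Whether an element of `ℤ/nℤ` is a unit is decided modulo the primes dividing `n`, so `Φ_k(n) / n^k`
is a product over these primes. For `k = 4m` and an odd prime `p`, writing `-1 = a² + b²` in `ℤ/pℤ`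
gives a `2m × 2m` matrix `J` with `Jᵀ J = -1`. The sum of squares of the coordinates of
`(x, z)` is then `(x - J z) ⬝ (x + J z)`, a hyperbolic form, and counting its zeros gives the factor
`(1 - 1/p) (1 - 1/p^{2m})`; for `p = 2` the factor is `1/2`. The products of the `1 - 1/p^{2m}`
over odd `p` converge to `ζ(2m)⁻¹` without its Euler factor at `2`. Up to a factor `1 + o(1)`, the
product of the `1 - 1/p` is smallest along primorials, where Mertens' third theorem makes it
`e^{-γ} / log log n`.

The constant in Mertens' theorem is found by letting `δ → 0⁺` in `∑ 1/p^{1+δ}`, which by the Euler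
product is `-log δ + ∑ (log (1 - 1/p) + 1/p) + o(1)`, and in `∑ e^{-δm}/m = -log (1 - e^{-δ})`. The
difference of these two series is a general Dirichlet series with convergent partial sums, to which
Abel's theorem applies.
-/

open Filter Real

/-- `Φ_k(n)`: the number of `k`-tuples `(x_1, …, x_k)` over `ℤ/nℤ` such that
`x_1² + ⋯ + x_k²` is a unit modulo `n`. -/
noncomputable def genTotient (k n : ℕ) : ℕ :=
  Nat.card {x : Fin k → ZMod n // IsUnit (∑ i, x i ^ 2)}

open MeasureTheory
open scoped Matrix Topology

/-- The proportion of the elements of a finite type that satisfy a predicate (`0` when the type is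
empty or infinite). -/
noncomputable def proportion {α : Type*} (P : α → Prop) : ℝ :=
  Nat.card {x // P x} / Nat.card α

section Proportion

variable {α β : Type*}

lemma proportion_comp_equiv (e : α ≃ β) (P : β → Prop) :
    proportion (fun x => P (e x)) = proportion P := by
  rw [proportion, proportion, Nat.card_congr e,
    Nat.card_congr (e.subtypeEquiv (q := P) fun _ => Iff.rfl)]

lemma proportion_ne [Finite α] (a : α) : proportion (· ≠ a) = 1 - 1 / Nat.card α := by
  have := Fintype.ofFinite α
  classical
  have hα : (Nat.card α : ℝ) ≠ 0 := Nat.cast_ne_zero.mpr (Nat.card_ne_zero.mpr ⟨⟨a⟩, ‹_›⟩)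
  have hcard : Nat.card {x // x ≠ a} = Nat.card α - 1 := by
    simp [Nat.card_eq_fintype_card, Fintype.card_subtype_compl]
  rw [proportion, hcard, Nat.cast_pred (Nat.card_pos_iff.mpr ⟨⟨a⟩, ‹_›⟩), sub_div, div_self hα]

lemma proportion_pi {ι : Type*} [Fintype ι] {α : ι → Type*} (P : ∀ i, α i → Prop) :
    proportion (fun x : ∀ i, α i => ∀ i, P i (x i)) = ∏ i, proportion (P i) := by
  simp only [proportion, Finset.prod_div_distrib, Nat.card_pi, ← Nat.cast_prod,
    Nat.card_congr (Equiv.subtypePiEquivPi (p := fun {i} => P i))]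

lemma proportion_prod_of_forall [Finite α] [Finite β] {P : α × β → Prop} {Q : α → Prop} {c : ℝ}
    (hQ : ∀ a b, P (a, b) → Q a) (hc : ∀ a, Q a → proportion (fun b => P (a, b)) = c) :
    proportion P = proportion Q * c := by
  have := Fintype.ofFinite α
  classical
  have hfiber (a : α) : proportion (fun b => P (a, b)) = if Q a then c else 0 := by
    split_ifs with ha
    · exact hc a ha
    · have : IsEmpty {b // P (a, b)} := ⟨fun b => ha (hQ a b b.2)⟩
      simp [proportion]
  have hsigma : Nat.card {x // P x} = ∑ a, Nat.card {b // P (a, b)} := by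
    rw [← Nat.card_sigma]
    exact Nat.card_congr
      ⟨fun x => ⟨x.1.1, x.1.2, x.2⟩, fun x => ⟨(x.1, x.2.1), x.2.2⟩, fun _ => rfl, fun _ => rfl⟩
  calc proportion P = (∑ a, proportion (fun b => P (a, b))) / Nat.card α := by
        rw [proportion, hsigma, Nat.card_prod]
        simp only [proportion, ← Finset.sum_div, Nat.cast_sum, Nat.cast_mul]
        rw [div_div, mul_comm]
    _ = proportion Q * c := by
        rw [Finset.sum_congr rfl fun a _ => hfiber a, ← Finset.sum_filter, Finset.sum_const,
          nsmul_eq_mul, proportion, Nat.card_eq_fintype_card, Nat.card_eq_fintype_card,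
          Fintype.card_subtype, div_mul_eq_mul_div]

lemma proportion_comp_of_surjective {G H : Type*} [AddGroup G] [AddGroup H] [Finite G]
    {f : G →+ H} (hf : Function.Surjective f) (P : H → Prop) :
    proportion (fun x => P (f x)) = proportion P := by
  have := Finite.of_surjective f hf
  have hfiber (Q : H → Prop) :
      Nat.card {x // Q (f x)} = Nat.card {y // Q y} * Nat.card f.ker := by
    rw [← Nat.card_prod, ← Nat.card_congr
      (Equiv.sigmaSubtypeFiberEquivSubtype f (p := fun x => Q (f x)) (q := Q) fun _ => Iff.rfl)]
    exact Nat.card_congr ((Equiv.sigmaCongrRight fun y : {y // Q y} =>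
      AddMonoidHom.fiberEquivKerOfSurjective hf y.1).trans (Equiv.sigmaEquivProd _ _))
  have hG : Nat.card G = Nat.card H * Nat.card f.ker := by
    simpa using hfiber fun _ => True
  rw [proportion, proportion, hfiber P, hG, Nat.cast_mul, Nat.cast_mul,
    mul_div_mul_right _ _ (Nat.cast_ne_zero.mpr Nat.card_pos.ne')]

end Proportion

section DotProduct

variable {ι F : Type*} [Fintype ι] [Field F] [Finite F]

lemma proportion_dotProduct_ne_zero {y : ι → F} (hy : y ≠ 0) :
    proportion (fun z : ι → F => y ⬝ᵥ z ≠ 0) = 1 - 1 / Nat.card F := by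
  classical
  obtain ⟨i, hi⟩ := Function.ne_iff.mp hy
  let f : (ι → F) →+ F := AddMonoidHom.mk' (y ⬝ᵥ ·) (dotProduct_add y)
  have hf : Function.Surjective f :=
    fun c => ⟨Pi.single i ((y i)⁻¹ * c), by simp [f, mul_inv_cancel_left₀ hi]⟩
  rw [← proportion_ne (0 : F)]
  exact proportion_comp_of_surjective hf (· ≠ 0)

lemma proportion_hyperbolic_ne_zero :
    proportion (fun z : (ι → F) × (ι → F) => z.1 ⬝ᵥ z.2 ≠ 0) =
      (1 - 1 / (Nat.card F : ℝ) ^ Fintype.card ι) * (1 - 1 / Nat.card F) := by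
  have hfst : ∀ y z : ι → F, y ⬝ᵥ z ≠ 0 → y ≠ 0 := by
    rintro y z hyz rfl
    exact hyz (zero_dotProduct z)
  rw [proportion_prod_of_forall (P := fun z : (ι → F) × (ι → F) => z.1 ⬝ᵥ z.2 ≠ 0) hfst
    fun _ => proportion_dotProduct_ne_zero, proportion_ne, Nat.card_fun,
    Nat.card_eq_fintype_card (α := ι), Nat.cast_pow]

lemma proportion_dotProduct_self_add_ne_zero [DecidableEq ι] (h2 : (2 : F) ≠ 0) {J : Matrix ι ι F}
    (hJ : Jᵀ * J = -1) :
    proportion (fun z : (ι → F) × (ι → F) => z.1 ⬝ᵥ z.1 + z.2 ⬝ᵥ z.2 ≠ 0) =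
      (1 - 1 / (Nat.card F : ℝ) ^ Fintype.card ι) * (1 - 1 / Nat.card F) := by
  let e (z : (ι → F) × (ι → F)) : (ι → F) × (ι → F) := (z.1 - J *ᵥ z.2, z.1 + J *ᵥ z.2)
  have hJJ (v w : ι → F) : J *ᵥ v ⬝ᵥ J *ᵥ w = -(v ⬝ᵥ w) := by
    rw [Matrix.dotProduct_mulVec, Matrix.vecMul_mulVec, hJ, Matrix.vecMul_neg, Matrix.vecMul_one,
      neg_dotProduct]
  have he : Function.Injective e := by
    intro z w hzw
    obtain ⟨hsub, hadd⟩ := Prod.ext_iff.mp hzw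
    have hfst : z.1 = w.1 := by
      have : (2 : F) • z.1 = (2 : F) • w.1 := by
        rw [two_smul, two_smul]
        convert congrArg₂ (· + ·) hsub hadd using 1 <;> simp [e]
      exact smul_right_injective _ h2 this
    have hJsnd : J *ᵥ z.2 = J *ᵥ w.2 := by simpa [e, hfst] using hadd
    have hsnd : z.2 = w.2 := by
      simpa [hJ, Matrix.neg_mulVec] using congrArg (Jᵀ *ᵥ ·) hJsnd
    exact Prod.ext hfst hsnd
  rw [← proportion_hyperbolic_ne_zero, eq_comm,
    ← proportion_comp_equiv (Equiv.ofBijective e (Finite.injective_iff_bijective.mp he))]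
  congr! 3 with z
  simp only [e, Equiv.ofBijective_apply, sub_dotProduct, dotProduct_add, hJJ,
    dotProduct_comm (J *ᵥ z.2) z.1]
  ring

lemma exists_transpose_mul_self_eq_neg_one [DecidableEq ι] :
    ∃ J : Matrix (ι ⊕ ι) (ι ⊕ ι) F, Jᵀ * J = -1 := by
  obtain ⟨p, hp⟩ := CharP.exists F
  have : NeZero p := ⟨CharP.char_ne_zero_of_finite F p⟩
  obtain ⟨a, b, hab⟩ := CharP.sq_add_sq F p (-1)
  refine ⟨Matrix.fromBlocks ((a : F) • 1) ((b : F) • 1) ((b : F) • 1) (-(a : F) • 1), ?_⟩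
  have hab' : (a : F) * a + b * b = -1 := by linear_combination hab
  have hba : (b : F) * b + a * a = -1 := by linear_combination hab
  rw [Matrix.fromBlocks_transpose, Matrix.fromBlocks_multiply, ← Matrix.fromBlocks_one,
    Matrix.fromBlocks_neg]
  simp [smul_smul, ← add_smul, hab', hba, mul_comm]

end DotProduct

/-- The proportion of the vectors `x ∈ R^ι` for which `∑ i, x i ^ 2` is a unit, so that
`Φ_k(n) / n^k` is `unitSumSqDensity (Fin k) (ZMod n)`. -/
noncomputable def unitSumSqDensity (ι R : Type*) [Fintype ι] [CommRing R] : ℝ :=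
  proportion fun x : ι → R => IsUnit (∑ i, x i ^ 2)

section UnitSumSqDensity

variable {ι : Type*} [Fintype ι]

lemma unitSumSqDensity_of_two_ne_zero {F : Type*} [Field F] [Finite F] (h2 : (2 : F) ≠ 0) {m : ℕ}
    (hι : Fintype.card ι = 4 * m) :
    unitSumSqDensity ι F = (1 - 1 / Nat.card F) * (1 - 1 / (Nat.card F : ℝ) ^ (2 * m)) := by
  classical
  obtain ⟨J, hJ⟩ := exists_transpose_mul_self_eq_neg_one (ι := Fin m) (F := F)
  have hcard : Fintype.card ((Fin m ⊕ Fin m) ⊕ (Fin m ⊕ Fin m)) = Fintype.card ι := by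
    simp only [Fintype.card_sum, Fintype.card_fin, hι]; ring
  let e := ((Fintype.equivOfCardEq hcard).arrowCongr (Equiv.refl F)).symm.trans
    (Equiv.sumArrowEquivProdArrow _ _ F)
  have he (x : ι → F) : (e x).1 ⬝ᵥ (e x).1 + (e x).2 ⬝ᵥ (e x).2 = ∑ i, x i ^ 2 := by
    rw [← (Fintype.equivOfCardEq hcard).sum_comp, Fintype.sum_sum_type]
    simp [e, dotProduct, sq]
  have := proportion_dotProduct_self_add_ne_zero h2 hJ
  rw [← proportion_comp_equiv e] at this
  simp only [he, ← isUnit_iff_ne_zero] at this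
  rw [unitSumSqDensity, this, mul_comm, Fintype.card_sum, Fintype.card_fin, two_mul]

lemma unitSumSqDensity_of_charTwo [Nonempty ι] {F : Type*} [Field F] [Finite F] [CharP F 2] :
    unitSumSqDensity ι F = 1 - 1 / Nat.card F := by
  have h1 : (1 : ι → F) ≠ 0 := one_ne_zero
  rw [← proportion_dotProduct_ne_zero h1, unitSumSqDensity]
  congr! 2 with x
  rw [← CharTwo.sum_sq, isUnit_pow_iff two_ne_zero, isUnit_iff_ne_zero, one_dotProduct]

lemma unitSumSqDensity_eq_of_surjective {R S : Type*} [CommRing R] [CommRing S] [Finite R]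
    (f : R →+* S) [IsLocalHom f] (hf : Function.Surjective f) :
    unitSumSqDensity ι R = unitSumSqDensity ι S := by
  rw [unitSumSqDensity, unitSumSqDensity,
    ← proportion_comp_of_surjective (f := f.toAddMonoidHom.compLeft ι) hf.comp_left]
  congr! 2 with x
  rw [← isUnit_map_iff f, map_sum]
  simp

lemma unitSumSqDensity_pi {κ : Type*} [Fintype κ] (R : κ → Type*) [∀ j, CommRing (R j)] :
    unitSumSqDensity ι (∀ j, R j) = ∏ j, unitSumSqDensity ι (R j) := by
  simp only [unitSumSqDensity]
  rw [← proportion_pi, eq_comm, ← proportion_comp_equiv (Equiv.piComm fun (_ : ι) j => R j)]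
  congr! 2 with x
  simp [Pi.isUnit_iff, Equiv.piComm_apply]

lemma unitSumSqDensity_zmod_eq_prod {n : ℕ} (hn : n ≠ 0) :
    unitSumSqDensity ι (ZMod n) = ∏ p ∈ n.primeFactors, unitSumSqDensity ι (ZMod p) := by
  have : NeZero n := ⟨hn⟩
  have hcop : Pairwise (Function.onFun Nat.Coprime (fun p : n.primeFactors => (p : ℕ))) := by
    intro p q hpq
    exact (Nat.coprime_primes (Nat.prime_of_mem_primeFactors p.2)
      (Nat.prime_of_mem_primeFactors q.2)).mpr fun h => hpq (Subtype.ext h)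
  have hdvd : (∏ p : n.primeFactors, (p : ℕ)) ∣ n := by
    rw [Finset.prod_coe_sort n.primeFactors (fun p => p)]
    exact Nat.prod_primeFactors_dvd n
  let f : ZMod n →+* (∀ p : n.primeFactors, ZMod p) :=
    (ZMod.prodEquivPi _ hcop).toRingHom.comp (ZMod.castHom hdvd _)
  have hf : Function.Surjective f :=
    (ZMod.prodEquivPi _ hcop).surjective.comp (ZMod.castHom_surjective hdvd)
  have : IsLocalHom f := by
    refine ⟨fun x hx => ?_⟩
    rw [← ZMod.natCast_zmod_val x, ZMod.isUnit_iff_coprime]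
    refine (Nat.coprime_of_dvd fun p hp hpn hpx => ?_).symm
    have hunit := Pi.isUnit_iff.mp hx ⟨p, Nat.mem_primeFactors.mpr ⟨hp, hpn, hn⟩⟩
    rw [← ZMod.natCast_zmod_val x, map_natCast, Pi.natCast_apply, ZMod.isUnit_iff_coprime] at hunit
    exact hp.one_lt.ne' (Nat.Coprime.eq_one_of_dvd hunit.symm hpx)
  rw [unitSumSqDensity_eq_of_surjective f hf, unitSumSqDensity_pi]
  exact Finset.prod_coe_sort n.primeFactors fun p => unitSumSqDensity ι (ZMod p)

lemma genTotient_div_pow (k n : ℕ) :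
    (genTotient k n : ℝ) / (n : ℝ) ^ k = unitSumSqDensity (Fin k) (ZMod n) := by
  simp [unitSumSqDensity, proportion, genTotient, Nat.card_fun]

end UnitSumSqDensity

section MertensFirst

lemma summable_log_div_mul_sub_one :
    Summable (fun n : ℕ => Real.log n / (n * (n - 1 : ℝ))) := by
  have hsummable : Summable (fun n : ℕ => 4 * (n : ℝ) ^ (-(3 / 2) : ℝ)) :=
    (Real.summable_nat_rpow.mpr (by norm_num)).mul_left 4
  refine Summable.of_norm_bounded_eventually_nat hsummable ?_
  filter_upwards [eventually_ge_atTop 2] with n hn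
  have hn' : (2 : ℝ) ≤ n := by exact_mod_cast hn
  have hlog : Real.log n ≤ 2 * (n : ℝ) ^ (1 / 2 : ℝ) := by
    linarith [Real.log_le_rpow_div (x := n) (ε := 1 / 2) (by linarith) (by norm_num)]
  have hpow : (n : ℝ) ^ (-(3 / 2) : ℝ) = (n : ℝ) ^ (1 / 2 : ℝ) / (n : ℝ) ^ 2 := by
    rw [← Real.rpow_natCast, ← Real.rpow_sub (by linarith)]; norm_num
  rw [Real.norm_of_nonneg (div_nonneg (Real.log_natCast_nonneg n) (by nlinarith)), hpow,
    div_le_iff₀ (by nlinarith)]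
  calc Real.log n ≤ 2 * (n : ℝ) ^ (1 / 2 : ℝ) := hlog
    _ = 4 * ((n : ℝ) ^ (1 / 2 : ℝ) / (n : ℝ) ^ 2) * ((n : ℝ) ^ 2 / 2) := by field_simp; norm_num
    _ ≤ 4 * ((n : ℝ) ^ (1 / 2 : ℝ) / (n : ℝ) ^ 2) * (n * (n - 1)) := by gcongr; nlinarith

lemma log_factorial_eq_sum_primesLE (N : ℕ) :
    Real.log N.factorial =
      ∑ p ∈ N.primesLE, (N.factorial.factorization p : ℝ) * Real.log p := by
  rw [Real.log_nat_eq_sum_factorization]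
  refine Finsupp.sum_of_support_subset _ (fun p hp => ?_) _ (by simp)
  rw [Nat.support_factorization, Nat.mem_primeFactors] at hp
  exact Nat.mem_primesLE.mpr ⟨hp.1.dvd_factorial.mp hp.2.1, hp.1⟩

lemma log_factorial_le_mul_log (N : ℕ) : Real.log N.factorial ≤ N * Real.log N := by
  rw [← Real.log_pow]
  exact Real.log_le_log (by positivity) (by exact_mod_cast N.factorial_le_pow)

lemma mul_log_sub_le_log_factorial (N : ℕ) :
    N * Real.log N - N ≤ Real.log N.factorial := by
  rcases Nat.eq_zero_or_pos N with rfl | hN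
  · simp
  have hπ : 0 ≤ Real.log (2 * π) := Real.log_nonneg (by linarith [Real.pi_gt_three])
  linarith [Stirling.le_log_factorial_stirling hN.ne', Real.log_natCast_nonneg N]

lemma div_sub_one_le_factorization_factorial {p : ℕ} (hp : p.Prime) (N : ℕ) :
    (N : ℝ) / p - 1 ≤ N.factorial.factorization p := by
  have hdiv : N / p ≤ N.factorial.factorization p := by
    rw [Nat.factorization_factorial hp (Nat.lt_add_of_pos_right two_pos)]
    simpa using Finset.single_le_sum (f := fun i => N / p ^ i)
      (s := Finset.Ico 1 (Nat.log p N + 2)) (fun _ _ => Nat.zero_le _) (a := 1) (by simp)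
  have hfloor : (N : ℝ) / p < (N / p : ℕ) + 1 := by
    simpa [Nat.floor_div_natCast] using Nat.lt_floor_add_one ((N : ℝ) / p)
  have : ((N / p : ℕ) : ℝ) ≤ N.factorial.factorization p := by exact_mod_cast hdiv
  linarith

lemma factorization_factorial_le_div {p : ℕ} (hp : p.Prime) (N : ℕ) :
    (N.factorial.factorization p : ℝ) ≤ N / (p - 1) := by
  have := Fact.mk hp
  have hlegendre : (p - 1) * N.factorial.factorization p ≤ N := by
    rw [Nat.factorization_def _ hp, sub_one_mul_padicValNat_factorial]
    exact Nat.sub_le _ _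
  have hp1 : (1 : ℝ) < p := by exact_mod_cast hp.one_lt
  rw [le_div_iff₀' (by linarith), ← Nat.cast_one, ← Nat.cast_sub hp.one_le]
  exact_mod_cast hlegendre

lemma mul_sum_log_div_le_log_factorial (N : ℕ) :
    N * ∑ p ∈ N.primesLE, Real.log p / p - Real.log 4 * N ≤ Real.log N.factorial := by
  calc N * ∑ p ∈ N.primesLE, Real.log p / p - Real.log 4 * N
      ≤ N * ∑ p ∈ N.primesLE, Real.log p / p - Chebyshev.theta N := by
        gcongr
        exact Chebyshev.theta_le_log4_mul_x N.cast_nonneg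
    _ = ∑ p ∈ N.primesLE, ((N : ℝ) / p - 1) * Real.log p := by
        rw [Chebyshev.theta_eq_sum_primesLE_log, Finset.mul_sum, ← Finset.sum_sub_distrib]
        exact Finset.sum_congr rfl fun p _ => by ring
    _ ≤ Real.log N.factorial := by
        rw [log_factorial_eq_sum_primesLE]
        refine Finset.sum_le_sum fun p hp => ?_
        gcongr
        exact div_sub_one_le_factorization_factorial (Nat.mem_primesLE.mp hp).2 N

lemma log_factorial_le_mul_sum_log_div_add (N : ℕ) :
    Real.log N.factorial ≤ N * ∑ p ∈ N.primesLE, Real.log p / p +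
      N * ∑' n : ℕ, Real.log n / (n * (n - 1 : ℝ)) := by
  have hnonneg (n : ℕ) : 0 ≤ Real.log n / (n * (n - 1 : ℝ)) := by
    rcases Nat.eq_zero_or_pos n with rfl | hn
    · simp
    · have : (1 : ℝ) ≤ n := by exact_mod_cast hn
      exact div_nonneg (Real.log_natCast_nonneg n) (mul_nonneg (by linarith) (by linarith))
  calc Real.log N.factorial
      ≤ ∑ p ∈ N.primesLE, N / (p - 1 : ℝ) * Real.log p := by
        rw [log_factorial_eq_sum_primesLE]
        refine Finset.sum_le_sum fun p hp => ?_
        gcongr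
        exact factorization_factorial_le_div (Nat.mem_primesLE.mp hp).2 N
    _ = N * ∑ p ∈ N.primesLE, Real.log p / p +
          N * ∑ p ∈ N.primesLE, Real.log p / (p * (p - 1 : ℝ)) := by
        rw [← mul_add, ← Finset.sum_add_distrib, Finset.mul_sum]
        refine Finset.sum_congr rfl fun p hp => ?_
        have hp1 : (1 : ℝ) < p := by exact_mod_cast (Nat.mem_primesLE.mp hp).2.one_lt
        have : (p : ℝ) - 1 ≠ 0 := by linarith
        field_simp
        ring
    _ ≤ _ := by
        gcongr
        exact summable_log_div_mul_sub_one.sum_le_tsum _ fun n _ => hnonneg n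

theorem exists_abs_sum_log_div_sub_log_le : ∃ C : ℝ, ∀ N : ℕ, 1 ≤ N →
    |∑ p ∈ N.primesLE, Real.log p / p - Real.log N| ≤ C := by
  set K := ∑' n : ℕ, Real.log n / (n * (n - 1 : ℝ))
  refine ⟨max (1 + K) (Real.log 4), fun N hN => abs_le.mpr ⟨?_, ?_⟩⟩
  all_goals
    have hN' : (0 : ℝ) < N := by exact_mod_cast hN
    refine le_of_mul_le_mul_left ?_ hN'
    rw [mul_sub]
  · calc (N : ℝ) * -max (1 + K) (Real.log 4) ≤ N * -(1 + K) := by gcongr; exact le_max_left _ _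
      _ ≤ _ := by
        linarith [log_factorial_le_mul_sum_log_div_add N, mul_log_sub_le_log_factorial N]
  · calc (N : ℝ) * ∑ p ∈ N.primesLE, Real.log p / p - N * Real.log N ≤ N * Real.log 4 := by
          linarith [mul_sum_log_div_le_log_factorial N, log_factorial_le_mul_log N]
      _ ≤ _ := by gcongr; exact le_max_right _ _

end MertensFirst

section PartialSummation

lemma sub_div_le_log_sub_log {a b : ℝ} (ha : 0 < a) (hb : 0 < b) :
    (b - a) / b ≤ Real.log b - Real.log a := by
  have := Real.log_le_sub_one_of_pos (div_pos ha hb)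
  rw [Real.log_div ha.ne' hb.ne'] at this
  rw [sub_div, div_self hb.ne']
  linarith

lemma log_sub_log_le_sub_div {a b : ℝ} (ha : 0 < a) (hb : 0 < b) :
    Real.log b - Real.log a ≤ (b - a) / a := by
  have := sub_div_le_log_sub_log hb ha
  rw [← neg_sub, neg_div] at this
  linarith

lemma summable_log_sub_log_sub_div {x : ℕ → ℝ} {C : ℝ} (hx : Monotone x) (hpos : 0 < x 0)
    (hC : ∀ n, x (n + 1) - x n ≤ C) :
    Summable fun n => Real.log (x (n + 1)) - Real.log (x n) - (x (n + 1) - x n) / x (n + 1) := by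
  have hxpos (n : ℕ) : 0 < x n := hpos.trans_le (hx n.zero_le)
  have hinv (n : ℕ) : (x (n + 1))⁻¹ ≤ (x n)⁻¹ := inv_anti₀ (hxpos n) (hx n.le_succ)
  have hC0 : 0 ≤ C := (sub_nonneg.mpr (hx (Nat.le_succ 0))).trans (hC 0)
  refine summable_of_sum_range_le (c := C * (x 0)⁻¹)
    (fun n => sub_nonneg.mpr (sub_div_le_log_sub_log (hxpos n) (hxpos _))) fun n => ?_
  calc ∑ i ∈ Finset.range n, (Real.log (x (i + 1)) - Real.log (x i) - (x (i + 1) - x i) / x (i + 1))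
      ≤ ∑ i ∈ Finset.range n, C * ((x i)⁻¹ - (x (i + 1))⁻¹) := by
        refine Finset.sum_le_sum fun i _ => ?_
        calc _ ≤ (x (i + 1) - x i) / x i - (x (i + 1) - x i) / x (i + 1) := by
              gcongr
              exact log_sub_log_le_sub_div (hxpos i) (hxpos _)
          _ = (x (i + 1) - x i) * ((x i)⁻¹ - (x (i + 1))⁻¹) := by ring
          _ ≤ _ := mul_le_mul_of_nonneg_right (hC i) (sub_nonneg.mpr (hinv i))
    _ = C * ((x 0)⁻¹ - (x n)⁻¹) := by rw [← Finset.mul_sum, Finset.sum_range_sub']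
    _ ≤ C * (x 0)⁻¹ := by
        gcongr
        exact sub_le_self _ (inv_nonneg.mpr (hxpos n).le)

/- Subtracting from `w i` the increments of `x` leaves terms with bounded partial sums, to which
Dirichlet's test applies; the increments themselves telescope up to a summable error. -/
lemma exists_tendsto_sum_div_sub_log {x w : ℕ → ℝ} {B C : ℝ} (hx : Monotone x) (hpos : 0 < x 1)
    (hC : ∀ n, x (n + 1) - x n ≤ C) (htop : Tendsto x atTop atTop)
    (hw : ∀ n, |∑ i ∈ Finset.range n, w i - x n| ≤ B) :
    ∃ c, Tendsto (fun n => ∑ i ∈ Finset.range n, w i / x (i + 1) - Real.log (x n)) atTop (𝓝 c) := by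
  have hxpos (n : ℕ) : 0 < x (n + 1) := hpos.trans_le (hx (Nat.le_add_left 1 n))
  have hdirichlet : CauchySeq fun n =>
      ∑ i ∈ Finset.range n, (x (i + 1))⁻¹ • (w i - (x (i + 1) - x i)) := by
    refine Antitone.cauchySeq_series_mul_of_tendsto_zero_of_bounded (b := B + |x 0|)
      (fun i j hij => inv_anti₀ (hxpos i) (hx (by lia)))
      (htop.comp (tendsto_add_atTop_nat 1)).inv_tendsto_atTop fun n => ?_
    rw [Finset.sum_sub_distrib, Finset.sum_range_sub x, ← sub_add, Real.norm_eq_abs]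
    exact (abs_add_le _ _).trans (by gcongr; exact hw n)
  obtain ⟨c, hc⟩ := cauchySeq_tendsto_of_complete hdirichlet
  have herror := (summable_log_sub_log_sub_div (x := fun n => x (n + 1))
    (fun i j hij => hx (by lia)) hpos fun n => hC (n + 1)).hasSum.tendsto_sum_nat
  refine ⟨_, (tendsto_add_atTop_iff_nat 1).mp
    (((hc.comp (tendsto_add_atTop_nat 1)).sub herror).add_const
      ((x 1 - x 0) / x 1 - Real.log (x 1)) |>.congr fun n => ?_)⟩
  have hsplit : ∑ i ∈ Finset.range (n + 1), w i / x (i + 1) =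
      ∑ i ∈ Finset.range (n + 1), (x (i + 1))⁻¹ • (w i - (x (i + 1) - x i)) +
        ∑ i ∈ Finset.range (n + 1), (x (i + 1) - x i) / x (i + 1) := by
    rw [← Finset.sum_add_distrib]
    exact Finset.sum_congr rfl fun i _ => by rw [smul_eq_mul]; ring
  rw [hsplit, Finset.sum_range_succ' (fun i => (x (i + 1) - x i) / x (i + 1)),
    Finset.sum_sub_distrib, Finset.sum_range_sub fun n => Real.log (x (n + 1))]
  simp only [Function.comp, zero_add]
  ring

lemma sum_primesLE_succ_eq_sum_range (f : ℕ → ℝ) (n : ℕ) :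
    ∑ p ∈ (n + 1).primesLE, f p =
      ∑ i ∈ Finset.range n, if (i + 2).Prime then f (i + 2) else 0 := by
  rw [Nat.primesLE_eq_filter_range, Finset.sum_filter, Finset.sum_range_succ',
    Finset.sum_range_succ']
  simp [Nat.not_prime_zero, Nat.not_prime_one]

theorem exists_tendsto_sum_one_div_sub_log_log : ∃ c : ℝ, Tendsto (fun N : ℕ =>
    ∑ p ∈ N.primesLE, 1 / (p : ℝ) - Real.log (Real.log N)) atTop (𝓝 c) := by
  obtain ⟨B, hB⟩ := exists_abs_sum_log_div_sub_log_le
  have hstep (n : ℕ) : Real.log (n + 1 + 1 : ℕ) - Real.log (n + 1 : ℕ) ≤ 1 := by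
    refine (log_sub_log_le_sub_div (by positivity) (by positivity)).trans ?_
    rw [div_le_one (by positivity)]
    push_cast
    linarith
  obtain ⟨c, hc⟩ := exists_tendsto_sum_div_sub_log (x := fun n : ℕ => Real.log (n + 1 : ℕ))
    (w := fun i => if (i + 2).Prime then Real.log (i + 2 : ℕ) / (i + 2 : ℕ) else 0)
    (monotone_nat_of_le_succ fun n => Real.log_le_log (by positivity) (by simp))
    (Real.log_pos (by norm_num)) hstep
    (Real.tendsto_log_atTop.comp (tendsto_natCast_atTop_atTop.comp (tendsto_add_atTop_nat 1)))
    fun n => by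
      rw [← sum_primesLE_succ_eq_sum_range fun p => Real.log p / p]
      exact hB (n + 1) n.succ_pos
  refine ⟨c, (tendsto_add_atTop_iff_nat 1).mp (hc.congr fun n => ?_)⟩
  rw [sum_primesLE_succ_eq_sum_range fun p => 1 / (p : ℝ)]
  congr 1
  refine Finset.sum_congr rfl fun i _ => ?_
  have : Real.log (i + 2 : ℕ) ≠ 0 := (Real.log_pos (by push_cast; linarith)).ne'
  split_ifs
  · rw [div_right_comm, div_self this]
  · exact zero_div _

end PartialSummation

section AbelSummation

/-- The partial sum `∑_{l i ≤ u} a i` of the family `a` ordered by the exponents `l`, as used for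
general Dirichlet series `∑ a i * e ^ (-δ * l i)`. It has the junk value `0` if the truncated family
is not summable. -/
noncomputable def truncatedSum {ι : Type*} (a l : ι → ℝ) (u : ℝ) : ℝ :=
  ∑' i, {i | l i ≤ u}.indicator a i

variable {ι : Type*} {a l : ι → ℝ}

lemma abs_indicator_le_exp_mul (u : ℝ) (i : ι) :
    |{i | l i ≤ u}.indicator a i| ≤ Real.exp u * (|a i| * Real.exp (-l i)) := by
  rw [Set.indicator_apply]
  split_ifs with hi
  · rw [mul_left_comm, ← Real.exp_add]
    exact le_mul_of_one_le_right (abs_nonneg _) (Real.one_le_exp (by simpa using hi))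
  · rw [abs_zero]
    positivity

lemma abs_truncatedSum_le (hsum : Summable fun i => |a i| * Real.exp (-l i)) (u : ℝ) :
    |truncatedSum a l u| ≤ Real.exp u * ∑' i, |a i| * Real.exp (-l i) :=
  tsum_of_norm_bounded (f := {i | l i ≤ u}.indicator a) (hsum.hasSum.mul_left _)
    (abs_indicator_le_exp_mul u)

lemma exists_abs_truncatedSum_le (hsum : Summable fun i => |a i| * Real.exp (-l i)) {L : ℝ}
    (hL : Tendsto (truncatedSum a l) atTop (𝓝 L)) : ∃ M, ∀ u, |truncatedSum a l u| ≤ M := by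
  obtain ⟨U, hU⟩ := eventually_atTop.mp (hL.abs.eventually (eventually_le_nhds (lt_add_one |L|)))
  refine ⟨max (|L| + 1) (Real.exp U * ∑' i, |a i| * Real.exp (-l i)), fun u => ?_⟩
  rcases le_total U u with h | h
  · exact (hU u h).trans (le_max_left _ _)
  · refine (abs_truncatedSum_le hsum u).trans (le_max_of_le_right ?_)
    gcongr

variable [Countable ι]

lemma measurable_truncatedSum : Measurable (truncatedSum a l) := by
  refine Measurable.tsum fun i => ?_
  exact (measurable_const (a := a i)).indicator (measurableSet_Ici (a := l i))

lemma integral_exp_neg_mul_truncatedSum {δ : ℝ} (hδ : 0 < δ) (hl : ∀ i, 0 < l i)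
    (hsum : Summable fun i => |a i| * Real.exp (-δ * l i)) :
    ∫ v in Set.Ioi (0 : ℝ), Real.exp (-v) * truncatedSum a l (v / δ) =
      ∑' i, a i * Real.exp (-δ * l i) := by
  have hsub (i : ι) : Set.Ici (δ * l i) ∩ Set.Ioi 0 = Set.Ici (δ * l i) :=
    Set.inter_eq_left.mpr fun v hv => (mul_pos hδ (hl i)).trans_le hv
  have hterm (c : ℝ) (i : ι) : ∫ v in Set.Ioi (0 : ℝ),
      (Set.Ici (δ * l i)).indicator (fun v => c * Real.exp (-v)) v = c * Real.exp (-δ * l i) := by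
    rw [integral_indicator measurableSet_Ici, Measure.restrict_restrict measurableSet_Ici, hsub,
      integral_const_mul, integral_Ici_eq_integral_Ioi, integral_exp_neg_Ioi, neg_mul]
  simp_rw [← hterm]
  rw [integral_tsum_of_summable_integral_norm]
  · refine integral_congr_ae (Eventually.of_forall fun v => ?_)
    simp only [truncatedSum, ← tsum_mul_left, Set.indicator_apply, Set.mem_Ici, Set.mem_ofPred_eq,
      le_div_iff₀' hδ, mul_ite, mul_zero, mul_comm (a _)]
  · intro i
    rw [integrable_indicator_iff measurableSet_Ici, IntegrableOn,
      Measure.restrict_restrict measurableSet_Ici, hsub]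
    exact ((integrableOn_Ici_iff_integrableOn_Ioi).2 (integrableOn_exp_neg_Ioi _)).const_mul _
  · refine hsum.congr fun i => ?_
    simp_rw [← hterm, norm_indicator_eq_indicator_norm, norm_mul, Real.norm_eq_abs, Real.abs_exp]

theorem tendsto_tsum_mul_exp_of_tendsto_truncatedSum (hl : ∀ i, 0 < l i)
    (hsum : ∀ δ > 0, Summable fun i => |a i| * Real.exp (-δ * l i)) {L : ℝ}
    (hL : Tendsto (truncatedSum a l) atTop (𝓝 L)) :
    Tendsto (fun δ => ∑' i, a i * Real.exp (-δ * l i)) (𝓝[>] 0) (𝓝 L) := by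
  obtain ⟨M, hM⟩ := exists_abs_truncatedSum_le (by simpa using hsum 1 one_pos) hL
  have hlim : Tendsto (fun δ : ℝ => ∫ v in Set.Ioi (0 : ℝ),
      Real.exp (-v) * truncatedSum a l (v / δ)) (𝓝[>] 0)
      (𝓝 (∫ v in Set.Ioi (0 : ℝ), Real.exp (-v) * L)) := by
    refine tendsto_integral_filter_of_dominated_convergence (fun v => Real.exp (-v) * M)
      (Eventually.of_forall fun δ => Measurable.aestronglyMeasurable ?_)
      (Eventually.of_forall fun δ => Eventually.of_forall fun v => ?_)
      ((integrableOn_exp_neg_Ioi 0).mul_const M) ?_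
    · exact (by fun_prop : Measurable fun v : ℝ => Real.exp (-v)).mul
        (measurable_truncatedSum.comp (measurable_id.div_const δ))
    · rw [norm_mul, Real.norm_eq_abs, Real.abs_exp]
      exact mul_le_mul_of_nonneg_left (hM _) (Real.exp_pos _).le
    · filter_upwards [ae_restrict_mem measurableSet_Ioi] with v hv
      exact (hL.comp ((tendsto_inv_nhdsGT_zero.const_mul_atTop hv).congr fun δ =>
        (div_eq_mul_inv v δ).symm)).const_mul _
  rw [integral_mul_const, integral_exp_neg_Ioi_zero, one_mul] at hlim
  refine hlim.congr' ?_
  filter_upwards [self_mem_nhdsWithin] with δ hδ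
  exact integral_exp_neg_mul_truncatedSum hδ hl (hsum δ hδ)

end AbelSummation

section FloorLog

lemma tendsto_log_floor_sub_log :
    Tendsto (fun u : ℝ => Real.log ⌊u⌋₊ - Real.log u) atTop (𝓝 0) := by
  have hlog := (tendsto_nat_floor_div_atTop (R := ℝ)).log one_ne_zero
  rw [Real.log_one] at hlog
  refine hlog.congr' ?_
  filter_upwards [eventually_ge_atTop 1] with u hu
  have hfloor : 0 < ⌊u⌋₊ := Nat.floor_pos.mpr hu
  exact Real.log_div (by positivity) (by positivity)

lemma tendsto_log_log_floor_exp_sub_log :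
    Tendsto (fun u : ℝ => Real.log (Real.log ⌊Real.exp u⌋₊) - Real.log u) atTop (𝓝 0) := by
  have hdiff : Tendsto (fun u : ℝ => Real.log ⌊Real.exp u⌋₊ - u) atTop (𝓝 0) :=
    (tendsto_log_floor_sub_log.comp Real.tendsto_exp_atTop).congr fun u => by simp
  have hratio : Tendsto (fun u : ℝ => Real.log ⌊Real.exp u⌋₊ / u) atTop (𝓝 1) := by
    have := (hdiff.div_atTop tendsto_id).add_const 1
    rw [zero_add] at this
    refine this.congr' ?_
    filter_upwards [eventually_ne_atTop 0] with u hu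
    rw [id, sub_div, div_self hu, sub_add_cancel]
  have hlog := hratio.log one_ne_zero
  rw [Real.log_one] at hlog
  refine hlog.congr' ?_
  filter_upwards [eventually_ne_atTop 0, hratio.eventually_ne one_ne_zero] with u hu hdiv
  exact Real.log_div (div_ne_zero_iff.mp hdiv).1 hu

end FloorLog

section PrimeSums

lemma two_le_primes_cast (p : Nat.Primes) : (2 : ℝ) ≤ (p : ℕ) := by exact_mod_cast p.2.two_le

lemma one_div_primes_rpow_le_one_div (p : Nat.Primes) {s : ℝ} (hs : 1 ≤ s) :
    1 / ((p : ℕ) : ℝ) ^ s ≤ 1 / ((p : ℕ) : ℝ) := by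
  have hp := two_le_primes_cast p
  exact one_div_le_one_div_of_le (by linarith) (Real.self_le_rpow_of_one_le (by linarith) hs)

lemma one_div_primes_rpow_le_half (p : Nat.Primes) {s : ℝ} (hs : 1 ≤ s) :
    1 / ((p : ℕ) : ℝ) ^ s ≤ 1 / 2 :=
  (one_div_primes_rpow_le_one_div p hs).trans
    (one_div_le_one_div_of_le two_pos (two_le_primes_cast p))

lemma summable_one_div_primes_rpow {s : ℝ} (hs : 1 < s) :
    Summable fun p : Nat.Primes => 1 / ((p : ℕ) : ℝ) ^ s :=
  (Nat.Primes.summable_rpow (r := -s).mpr (neg_lt_neg hs)).congr fun p => by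
    rw [Real.rpow_neg p.1.cast_nonneg, one_div]

lemma summable_log_one_sub_one_div_primes_rpow {s : ℝ} (hs : 1 < s) :
    Summable fun p : Nat.Primes => Real.log (1 - 1 / ((p : ℕ) : ℝ) ^ s) := by
  simpa only [sub_eq_add_neg] using
    Real.summable_log_one_add_of_summable (summable_one_div_primes_rpow hs).neg

lemma abs_log_one_sub_add_le {y : ℝ} (h0 : 0 ≤ y) (h1 : y ≤ 1 / 2) :
    |Real.log (1 - y) + y| ≤ 2 * y ^ 2 := by
  have htaylor := Real.abs_log_sub_add_sum_range_le (x := y) (by rw [abs_of_nonneg h0]; linarith) 1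
  rw [abs_of_nonneg h0] at htaylor
  calc |Real.log (1 - y) + y| ≤ y ^ 2 / (1 - y) := by simpa [add_comm] using htaylor
    _ ≤ 2 * y ^ 2 := by
      rw [div_le_iff₀ (by linarith)]
      nlinarith [sq_nonneg y]

lemma abs_log_one_sub_add_one_div_primes_rpow_le (p : Nat.Primes) {s : ℝ} (hs : 1 ≤ s) :
    |Real.log (1 - 1 / ((p : ℕ) : ℝ) ^ s) + 1 / ((p : ℕ) : ℝ) ^ s| ≤
      2 * (1 / ((p : ℕ) : ℝ)) ^ 2 := by
  refine (abs_log_one_sub_add_le (by positivity) (one_div_primes_rpow_le_half p hs)).trans ?_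
  have := pow_le_pow_left₀ (by positivity) (one_div_primes_rpow_le_one_div p hs) 2
  linarith

lemma summable_two_mul_one_div_primes_sq :
    Summable fun p : Nat.Primes => 2 * (1 / ((p : ℕ) : ℝ)) ^ 2 :=
  ((summable_one_div_primes_rpow one_lt_two).mul_left 2).congr fun p => by
    rw [Real.rpow_two, one_div_pow]

lemma summable_log_one_sub_add_one_div_primes :
    Summable fun p : Nat.Primes => Real.log (1 - 1 / ((p : ℕ) : ℝ)) + 1 / ((p : ℕ) : ℝ) :=
  summable_two_mul_one_div_primes_sq.of_norm_bounded fun p => by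
    simpa using abs_log_one_sub_add_one_div_primes_rpow_le p le_rfl

lemma tendsto_tsum_log_one_sub_add_one_div_primes_rpow :
    Tendsto (fun s : ℝ => ∑' p : Nat.Primes,
      (Real.log (1 - 1 / ((p : ℕ) : ℝ) ^ s) + 1 / ((p : ℕ) : ℝ) ^ s)) (𝓝[>] 1)
      (𝓝 (∑' p : Nat.Primes, (Real.log (1 - 1 / ((p : ℕ) : ℝ)) + 1 / ((p : ℕ) : ℝ)))) := by
  refine tendsto_tsum_of_dominated_convergence summable_two_mul_one_div_primes_sq (fun p => ?_) ?_
  · have hpow : Tendsto (fun s : ℝ => 1 / ((p : ℕ) : ℝ) ^ s) (𝓝[>] 1) (𝓝 (1 / ((p : ℕ) : ℝ))) := by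
      have hp := two_le_primes_cast p
      have hcont : ContinuousAt (fun s : ℝ => 1 / ((p : ℕ) : ℝ) ^ s) 1 :=
        continuousAt_const.div (Real.continuousAt_const_rpow (by linarith)) (by positivity)
      simpa using hcont.tendsto.mono_left nhdsWithin_le_nhds
    have hhalf := one_div_primes_rpow_le_half p le_rfl
    rw [Real.rpow_one] at hhalf
    exact ((hpow.const_sub 1).log (by linarith)).add hpow
  · filter_upwards [self_mem_nhdsWithin] with s hs p
    exact abs_log_one_sub_add_one_div_primes_rpow_le p (le_of_lt hs)

lemma log_tsum_one_div_rpow {s : ℝ} (hs : 1 < s) :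
    Real.log (∑' n : ℕ, 1 / (n : ℝ) ^ s) =
      -∑' p : Nat.Primes, Real.log (1 - 1 / ((p : ℕ) : ℝ) ^ s) := by
  let f : ℕ →*₀ ℝ :=
    { toFun := fun n => 1 / (n : ℝ) ^ s
      map_zero' := by simp [Real.zero_rpow (by linarith : s ≠ 0)]
      map_one' := by simp
      map_mul' := fun m n => by
        rw [Nat.cast_mul, Real.mul_rpow m.cast_nonneg n.cast_nonneg, one_div_mul_one_div] }
  have hsum : Summable fun n => ‖f n‖ := (Real.summable_one_div_nat_rpow.mpr hs).norm
  have hpos (p : Nat.Primes) : 0 < (1 - f p)⁻¹ := by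
    have : f p ≤ 1 / 2 := one_div_primes_rpow_le_half p hs.le
    exact inv_pos.mpr (by linarith)
  have hlog (p : Nat.Primes) : Real.log (1 - f p)⁻¹ = -Real.log (1 - 1 / ((p : ℕ) : ℝ) ^ s) :=
    Real.log_inv _
  have hsumlog : Summable fun p : Nat.Primes => Real.log (1 - f p)⁻¹ :=
    (summable_log_one_sub_one_div_primes_rpow hs).neg.congr fun p => (hlog p).symm
  calc Real.log (∑' n : ℕ, 1 / (n : ℝ) ^ s) = Real.log (∏' p : Nat.Primes, (1 - f p)⁻¹) := by
        rw [EulerProduct.eulerProduct_completely_multiplicative_tprod hsum]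
        rfl
    _ = ∑' p : Nat.Primes, Real.log (1 - f p)⁻¹ := by
        rw [← Real.rexp_tsum_eq_tprod hpos hsumlog, Real.log_exp]
    _ = _ := by simp_rw [hlog, tsum_neg]

lemma tendsto_tsum_one_div_primes_rpow_add_log :
    Tendsto (fun s : ℝ => ∑' p : Nat.Primes, 1 / ((p : ℕ) : ℝ) ^ s + Real.log (s - 1)) (𝓝[>] 1)
      (𝓝 (∑' p : Nat.Primes, (Real.log (1 - 1 / ((p : ℕ) : ℝ)) + 1 / ((p : ℕ) : ℝ)))) := by
  have hzeta := tendsto_sub_mul_tsum_nat_rpow.log one_ne_zero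
  have hadd := tendsto_tsum_log_one_sub_add_one_div_primes_rpow.add hzeta
  rw [Real.log_one, add_zero] at hadd
  refine hadd.congr' ?_
  filter_upwards [self_mem_nhdsWithin,
    tendsto_sub_mul_tsum_nat_rpow.eventually_ne one_ne_zero] with s hs hne
  obtain ⟨hs0, hζ0⟩ := mul_ne_zero_iff.mp hne
  rw [Real.log_mul hs0 hζ0, log_tsum_one_div_rpow hs,
    (summable_log_one_sub_one_div_primes_rpow hs).tsum_add (summable_one_div_primes_rpow hs)]
  ring

/-- `Nat.primesLE` as a finset of the type `Nat.Primes`, over which the infinite sums run. -/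
def primesFinsetLE (N : ℕ) : Finset Nat.Primes := N.primesLE.subtype Nat.Prime

lemma mem_primesFinsetLE {N : ℕ} {p : Nat.Primes} : p ∈ primesFinsetLE N ↔ (p : ℕ) ≤ N :=
  Finset.mem_subtype.trans (Nat.mem_primesLE.trans (and_iff_left p.2))

lemma sum_primesFinsetLE (f : ℕ → ℝ) (N : ℕ) :
    ∑ p ∈ primesFinsetLE N, f p = ∑ p ∈ N.primesLE, f p :=
  Finset.sum_subtype_of_mem f fun _ hp => (Nat.mem_primesLE.mp hp).2

lemma tendsto_sum_primesLE {f : ℕ → ℝ} (hf : Summable fun p : Nat.Primes => f p) :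
    Tendsto (fun N : ℕ => ∑ p ∈ N.primesLE, f p) atTop (𝓝 (∑' p : Nat.Primes, f p)) := by
  have hmono : Monotone primesFinsetLE := fun M N hMN p hp =>
    mem_primesFinsetLE.mpr ((mem_primesFinsetLE.mp hp).trans hMN)
  exact (hf.hasSum.comp (tendsto_atTop_finset_of_monotone hmono fun p =>
    ⟨p, mem_primesFinsetLE.mpr le_rfl⟩)).congr (sum_primesFinsetLE f)

end PrimeSums

section MertensSecondThird

/-- The Meissel–Mertens constant, the limit of `∑_{p ≤ N} 1 / p - log (log N)`, in its explicit
form. -/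
noncomputable def meisselMertens : ℝ :=
  Real.eulerMascheroniConstant +
    ∑' p : Nat.Primes, (Real.log (1 - 1 / ((p : ℕ) : ℝ)) + 1 / ((p : ℕ) : ℝ))

lemma hasSum_indicator_log_primes_le (f : ℕ → ℝ) (u : ℝ) :
    HasSum ({p : Nat.Primes | Real.log p ≤ u}.indicator fun p => f p)
      (∑ p ∈ ⌊Real.exp u⌋₊.primesLE, f p) := by
  have hset : {p : Nat.Primes | Real.log p ≤ u} = primesFinsetLE ⌊Real.exp u⌋₊ := by
    ext p
    rw [SetLike.mem_coe, mem_primesFinsetLE, Nat.le_floor_iff (Real.exp_pos u).le]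
    exact Real.log_le_iff_le_exp (by exact_mod_cast p.2.pos)
  rw [hset, ← sum_primesFinsetLE]
  exact hasSum_subtype_iff_indicator.mp (Finset.hasSum _ _)

lemma hasSum_indicator_add_one_le (f : ℕ → ℝ) (u : ℝ) :
    HasSum ({m : ℕ | (m : ℝ) + 1 ≤ u}.indicator f) (∑ m ∈ Finset.range ⌊u⌋₊, f m) := by
  have hset : {m : ℕ | (m : ℝ) + 1 ≤ u} = Finset.range ⌊u⌋₊ := by
    ext m
    rw [SetLike.mem_coe, Finset.mem_range, ← Nat.succ_le_iff, Nat.le_floor_iff' m.succ_ne_zero,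
      Nat.cast_succ]
    rfl
  rw [hset]
  exact hasSum_subtype_iff_indicator.mp (Finset.hasSum _ _)

lemma hasSum_exp_div_add_one {δ : ℝ} (hδ : 0 < δ) :
    HasSum (fun m : ℕ => 1 / ((m : ℝ) + 1) * Real.exp (-δ * ((m : ℝ) + 1)))
      (-Real.log (1 - Real.exp (-δ))) := by
  have h := Real.hasSum_pow_div_log_of_abs_lt_one (x := Real.exp (-δ)) (by
    rwa [Real.abs_exp, Real.exp_lt_one_iff, neg_lt_zero])
  refine h.congr_fun fun m => ?_
  rw [← Real.exp_nat_mul, Nat.cast_succ, mul_comm _ (-δ), one_div_mul_eq_div]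

lemma tendsto_log_one_sub_exp_neg_sub_log :
    Tendsto (fun δ : ℝ => Real.log (1 - Real.exp (-δ)) - Real.log δ) (𝓝[>] 0) (𝓝 0) := by
  have hderiv : HasDerivAt (fun δ : ℝ => 1 - Real.exp (-δ)) 1 0 := by
    simpa using (hasDerivAt_neg (0 : ℝ)).exp.const_sub 1
  have hslope := ((hasDerivAt_iff_tendsto_slope.mp hderiv).mono_left
    (nhdsWithin_mono _ fun x hx => ne_of_gt hx)).log one_ne_zero
  rw [Real.log_one] at hslope
  refine hslope.congr' ?_
  filter_upwards [self_mem_nhdsWithin] with δ hδ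
  have hexp : Real.exp (-δ) < 1 := Real.exp_lt_one_iff.mpr (neg_lt_zero.mpr hδ)
  rw [← Real.log_div (by linarith) (ne_of_gt hδ), slope_def_field]
  simp

/-- The terms `1 / p` at the primes and `-1 / m` at the integers `m ≥ 1`, for comparing the sum of
the `1 / p` with the harmonic series; the integer `m` is encoded as the natural number `m - 1`. -/
noncomputable def mertensCoeff : Nat.Primes ⊕ ℕ → ℝ :=
  Sum.elim (fun p => 1 / ((p : ℕ) : ℝ)) fun m => -(1 / ((m : ℝ) + 1))

/-- The exponents `log p` and `m` of the general Dirichlet series with coefficients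
`mertensCoeff`. -/
noncomputable def mertensExponent : Nat.Primes ⊕ ℕ → ℝ :=
  Sum.elim (fun p => Real.log p) fun m => (m : ℝ) + 1

lemma mertensExponent_pos (i : Nat.Primes ⊕ ℕ) : 0 < mertensExponent i := by
  rcases i with p | m
  · exact Real.log_pos (by linarith [two_le_primes_cast p])
  · exact m.cast_add_one_pos

lemma truncatedSum_mertens (u : ℝ) : truncatedSum mertensCoeff mertensExponent u =
    ∑ p ∈ ⌊Real.exp u⌋₊.primesLE, 1 / (p : ℝ) - harmonic ⌊u⌋₊ := by
  have hharmonic : (harmonic ⌊u⌋₊ : ℝ) = ∑ m ∈ Finset.range ⌊u⌋₊, 1 / ((m : ℝ) + 1) := by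
    simp [harmonic]
  rw [hharmonic, sub_eq_add_neg, ← Finset.sum_neg_distrib]
  exact (HasSum.sum (f := {i | mertensExponent i ≤ u}.indicator mertensCoeff)
    (hasSum_indicator_log_primes_le (fun p => 1 / (p : ℝ)) u)
    (hasSum_indicator_add_one_le (fun m => -(1 / ((m : ℝ) + 1))) u)).tsum_eq

lemma tendsto_truncatedSum_mertens {c : ℝ} (hc : Tendsto (fun N : ℕ =>
      ∑ p ∈ N.primesLE, 1 / (p : ℝ) - Real.log (Real.log N)) atTop (𝓝 c)) :
    Tendsto (truncatedSum mertensCoeff mertensExponent) atTop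
      (𝓝 (c - Real.eulerMascheroniConstant)) := by
  have hprimes := hc.comp (tendsto_nat_floor_atTop.comp Real.tendsto_exp_atTop)
  have hharmonic := Real.tendsto_harmonic_sub_log.comp (tendsto_nat_floor_atTop (α := ℝ))
  have hlim := (hprimes.add tendsto_log_log_floor_exp_sub_log).sub
    (hharmonic.add tendsto_log_floor_sub_log)
  rw [add_zero, add_zero] at hlim
  refine hlim.congr fun u => ?_
  rw [truncatedSum_mertens]
  simp only [Function.comp]
  ring

lemma one_div_mul_exp_neg_mul_log (p : Nat.Primes) (δ : ℝ) :
    1 / ((p : ℕ) : ℝ) * Real.exp (-δ * Real.log p) = 1 / ((p : ℕ) : ℝ) ^ (1 + δ) := by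
  have hp : (0 : ℝ) < (p : ℕ) := by exact_mod_cast p.2.pos
  rw [Real.rpow_add hp, Real.rpow_one, Real.rpow_def_of_pos hp, neg_mul, Real.exp_neg, mul_comm δ,
    one_div_mul_eq_div, one_div, mul_inv, mul_comm, div_eq_mul_inv]
  ring

lemma hasSum_abs_mertensCoeff_mul_exp {δ : ℝ} (hδ : 0 < δ) :
    HasSum (fun i => |mertensCoeff i| * Real.exp (-δ * mertensExponent i))
      (∑' p : Nat.Primes, 1 / ((p : ℕ) : ℝ) ^ (1 + δ) - Real.log (1 - Real.exp (-δ))) := by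
  refine HasSum.sum ((summable_one_div_primes_rpow (by linarith : 1 < 1 + δ)).hasSum.congr_fun
    fun p => ?_) ((hasSum_exp_div_add_one hδ).congr_fun fun m => ?_)
  · rw [← one_div_mul_exp_neg_mul_log]
    simp [mertensCoeff, mertensExponent]
  · simp [mertensCoeff, mertensExponent, abs_of_pos (Nat.cast_add_one_pos (α := ℝ) m)]

lemma hasSum_mertensCoeff_mul_exp {δ : ℝ} (hδ : 0 < δ) :
    HasSum (fun i => mertensCoeff i * Real.exp (-δ * mertensExponent i))
      (∑' p : Nat.Primes, 1 / ((p : ℕ) : ℝ) ^ (1 + δ) + Real.log (1 - Real.exp (-δ))) := by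
  rw [← neg_neg (Real.log _)]
  refine HasSum.sum ((summable_one_div_primes_rpow (by linarith : 1 < 1 + δ)).hasSum.congr_fun
    fun p => ?_) ((hasSum_exp_div_add_one hδ).neg.congr_fun fun m => ?_)
  · exact one_div_mul_exp_neg_mul_log p δ
  · exact neg_mul _ _

lemma tendsto_tsum_mertensCoeff_mul_exp :
    Tendsto (fun δ => ∑' i, mertensCoeff i * Real.exp (-δ * mertensExponent i)) (𝓝[>] 0)
      (𝓝 (∑' p : Nat.Primes, (Real.log (1 - 1 / ((p : ℕ) : ℝ)) + 1 / ((p : ℕ) : ℝ)))) := by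
  have hshift : Tendsto (fun δ : ℝ => 1 + δ) (𝓝[>] 0) (𝓝[>] 1) := by
    exact map_add_left_nhdsGT.le.trans_eq (by rw [add_zero])
  have hlim := (tendsto_tsum_one_div_primes_rpow_add_log.comp hshift).add
    tendsto_log_one_sub_exp_neg_sub_log
  rw [add_zero] at hlim
  refine hlim.congr' ?_
  filter_upwards [self_mem_nhdsWithin] with δ hδ
  rw [(hasSum_mertensCoeff_mul_exp hδ).tsum_eq, Function.comp, add_sub_cancel_left]
  ring

theorem tendsto_sum_one_div_sub_log_log : Tendsto (fun N : ℕ =>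
    ∑ p ∈ N.primesLE, 1 / (p : ℝ) - Real.log (Real.log N)) atTop (𝓝 meisselMertens) := by
  obtain ⟨c, hc⟩ := exists_tendsto_sum_one_div_sub_log_log
  have habel := tendsto_tsum_mul_exp_of_tendsto_truncatedSum mertensExponent_pos
    (fun δ hδ => (hasSum_abs_mertensCoeff_mul_exp hδ).summable) (tendsto_truncatedSum_mertens hc)
  have hc_eq := tendsto_nhds_unique habel tendsto_tsum_mertensCoeff_mul_exp
  rwa [meisselMertens, ← hc_eq, add_sub_cancel]

/-- The product `∏_{p ≤ N} (1 - 1 / p)` over primes, whose decay is Mertens' third theorem. -/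
noncomputable def mertensProduct (N : ℕ) : ℝ :=
  ∏ p ∈ N.primesLE, (1 - 1 / (p : ℝ))

theorem tendsto_mertensProduct_mul_log :
    Tendsto (fun N : ℕ => mertensProduct N * Real.log N) atTop
      (𝓝 (Real.exp (-Real.eulerMascheroniConstant))) := by
  have hlim := (tendsto_sum_primesLE (f := fun p => Real.log (1 - 1 / (p : ℝ)) + 1 / (p : ℝ))
    summable_log_one_sub_add_one_div_primes).sub tendsto_sum_one_div_sub_log_log
  rw [meisselMertens, sub_add_cancel_right] at hlim
  refine ((Real.continuous_exp.tendsto _).comp hlim).congr' ?_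
  filter_upwards [eventually_ge_atTop 2] with N hN
  have hlog : 0 < Real.log N := Real.log_pos (by exact_mod_cast hN)
  rw [Function.comp, Finset.sum_add_distrib, add_sub_assoc, sub_sub_cancel, Real.exp_add,
    Real.exp_log hlog, Real.exp_sum, mertensProduct]
  congr 1
  refine Finset.prod_congr rfl fun p hp => Real.exp_log (sub_pos.mpr ?_)
  exact (div_lt_one (by exact_mod_cast (Nat.mem_primesLE.mp hp).2.pos)).mpr
    (by exact_mod_cast (Nat.mem_primesLE.mp hp).2.one_lt)

end MertensSecondThird

section MinimalOrder

lemma one_sub_one_div_natCast_mem_Icc (n : ℕ) : 1 - 1 / (n : ℝ) ∈ Set.Icc 0 1 :=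
  ⟨sub_nonneg.mpr (one_div (n : ℝ) ▸ Nat.cast_inv_le_one n), sub_le_self _ (by positivity)⟩

lemma mertensProduct_nonneg (N : ℕ) : 0 ≤ mertensProduct N :=
  Finset.prod_nonneg fun p _ => (one_sub_one_div_natCast_mem_Icc p).1

lemma tendsto_mertensProduct : Tendsto mertensProduct atTop (𝓝 0) := by
  have hlog : Tendsto (fun N : ℕ => Real.log N) atTop atTop :=
    Real.tendsto_log_atTop.comp tendsto_natCast_atTop_atTop
  refine (tendsto_mertensProduct_mul_log.div_atTop hlog).congr' ?_
  filter_upwards [hlog.eventually_gt_atTop 0] with N hN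
  exact mul_div_cancel_right₀ _ hN.ne'

lemma tendsto_mertensProduct_floor_mul_log :
    Tendsto (fun x : ℝ => mertensProduct ⌊x⌋₊ * (1 - 1 / Real.log x) * Real.log x) atTop
      (𝓝 (Real.exp (-Real.eulerMascheroniConstant))) := by
  have hfloor := tendsto_mertensProduct_mul_log.comp (tendsto_nat_floor_atTop (α := ℝ))
  have herror :=
    (tendsto_mertensProduct.comp (tendsto_nat_floor_atTop (α := ℝ))).mul tendsto_log_floor_sub_log
  have hlog : Tendsto (fun x : ℝ => 1 - 1 / Real.log x) atTop (𝓝 (1 - 0)) :=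
    (tendsto_const_nhds.div_atTop Real.tendsto_log_atTop).const_sub 1
  have h := (hfloor.sub herror).mul hlog
  rw [mul_zero, sub_zero, sub_zero, mul_one] at h
  refine h.congr fun x => ?_
  simp only [Function.comp_apply]
  ring

lemma card_mul_log_le_log {n : ℕ} (hn : n ≠ 0) {T : Finset ℕ} (hT : T ⊆ n.primeFactors) {x : ℝ}
    (hx : 0 < x) (hxT : ∀ p ∈ T, x ≤ p) : T.card * Real.log x ≤ Real.log n := by
  have hdvd : ∏ p ∈ T, p ∣ n :=
    (Finset.prod_dvd_prod_of_subset _ _ _ hT).trans (Nat.prod_primeFactors_dvd n)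
  have hpow : x ^ T.card ≤ n :=
    calc x ^ T.card = ∏ _p ∈ T, x := (Finset.prod_const x).symm
      _ ≤ ∏ p ∈ T, (p : ℝ) := Finset.prod_le_prod (fun _ _ => hx.le) hxT
      _ = (∏ p ∈ T, p : ℕ) := (Nat.cast_prod _ _).symm
      _ ≤ n := by exact_mod_cast Nat.le_of_dvd (Nat.pos_of_ne_zero hn) hdvd
  rw [← Real.log_pow]
  exact Real.log_le_log (pow_pos hx _) hpow

lemma one_sub_card_div_le_prod_one_sub_one_div {T : Finset ℕ} {x : ℝ} (hx : 1 ≤ x)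
    (hxT : ∀ p ∈ T, x ≤ p) : 1 - T.card / x ≤ ∏ p ∈ T, (1 - 1 / (p : ℝ)) := by
  have hx1 : 1 / x ≤ 1 := (div_le_one (by linarith)).mpr hx
  calc 1 - T.card / x = 1 + (T.card : ℝ) * (-(1 / x)) := by ring
    _ ≤ (1 + -(1 / x)) ^ T.card := one_add_mul_le_pow (by linarith) _
    _ = ∏ _p ∈ T, (1 + -(1 / x)) := (Finset.prod_const _).symm
    _ ≤ ∏ p ∈ T, (1 - 1 / (p : ℝ)) := by
        refine Finset.prod_le_prod (fun _ _ => by linarith) fun p hp => ?_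
        linarith [one_div_le_one_div_of_le (by linarith) (hxT p hp)]

lemma one_sub_one_div_log_log_le_prod {n : ℕ} (hn : Real.exp 1 ≤ Real.log n) {T : Finset ℕ}
    (hT : T ⊆ n.primeFactors) (hlarge : ∀ p ∈ T, Real.log n ≤ p) :
    1 - 1 / Real.log (Real.log n) ≤ ∏ p ∈ T, (1 - 1 / (p : ℝ)) := by
  have hlog : 0 < Real.log n := (Real.exp_pos 1).trans_le hn
  have hloglog : 0 < Real.log (Real.log n) :=
    zero_lt_one.trans_le ((Real.le_log_iff_exp_le hlog).mpr hn)
  have hn0 : n ≠ 0 := by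
    rintro rfl
    simp at hlog
  refine le_trans (sub_le_sub_left ?_ 1) (one_sub_card_div_le_prod_one_sub_one_div
    ((Real.one_le_exp zero_le_one).trans hn) hlarge)
  rw [div_le_div_iff₀ hlog hloglog, one_mul]
  exact card_mul_log_le_log hn0 hT hlog hlarge

/- At most `log n / log log n` prime factors of `n` exceed `log n`, so together they contribute a
factor of at least `1 - 1 / log log n`. -/
lemma mertensProduct_mul_le_prod_primeFactors {n : ℕ} (hn : Real.exp 1 ≤ Real.log n) :
    mertensProduct ⌊Real.log n⌋₊ * (1 - 1 / Real.log (Real.log n)) ≤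
      ∏ p ∈ n.primeFactors, (1 - 1 / (p : ℝ)) := by
  have hlog : 0 < Real.log n := (Real.exp_pos 1).trans_le hn
  have hsmall : mertensProduct ⌊Real.log n⌋₊ ≤
      ∏ p ∈ n.primeFactors with p ≤ ⌊Real.log n⌋₊, (1 - 1 / (p : ℝ)) := by
    refine Finset.prod_le_prod_of_subset_of_le_one (fun p hp => ?_)
      (fun p _ => (one_sub_one_div_natCast_mem_Icc p).1)
      fun p _ _ => (one_sub_one_div_natCast_mem_Icc p).2
    rw [Finset.mem_filter] at hp
    exact Nat.mem_primesLE.mpr ⟨hp.2, Nat.prime_of_mem_primeFactors hp.1⟩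
  have hlarge : 1 - 1 / Real.log (Real.log n) ≤
      ∏ p ∈ n.primeFactors with ¬p ≤ ⌊Real.log n⌋₊, (1 - 1 / (p : ℝ)) := by
    refine one_sub_one_div_log_log_le_prod hn (Finset.filter_subset _ _) fun p hp => ?_
    exact ((Nat.floor_lt hlog.le).mp (not_le.mp (Finset.mem_filter.mp hp).2)).le
  have hnonneg : 0 ≤ 1 - 1 / Real.log (Real.log n) :=
    sub_nonneg.mpr (div_le_one_of_le₀ ((Real.le_log_iff_exp_le hlog).mpr hn)
      (zero_le_one.trans ((Real.le_log_iff_exp_le hlog).mpr hn)))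
  rw [← Finset.prod_filter_mul_prod_filter_not n.primeFactors (· ≤ ⌊Real.log n⌋₊)]
  exact mul_le_mul hsmall hlarge hnonneg ((mertensProduct_nonneg _).trans hsmall)

lemma tendsto_primorial_atTop : Tendsto primorial atTop atTop :=
  tendsto_atTop_mono (fun _ => le_primorial_self) tendsto_id

lemma log_log_primorial_le {N : ℕ} (hN : 2 ≤ N) :
    Real.log (Real.log (primorial N)) ≤ Real.log N + Real.log (Real.log 4) := by
  have hN' : (2 : ℝ) ≤ N := by exact_mod_cast hN
  have hlog4 : 0 < Real.log 4 := Real.log_pos (by norm_num)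
  have htheta : Real.log (primorial N) = Chebyshev.theta N := by
    rw [Chebyshev.theta_eq_log_primorial, Nat.floor_natCast]
  rw [htheta, add_comm, ← Real.log_mul hlog4.ne' (by linarith)]
  exact Real.log_le_log (Chebyshev.theta_pos hN') (Chebyshev.theta_le_log4_mul_x (by linarith))

lemma liminf_eq_of_tendsto_lower_of_tendsto_upper {f low up : ℕ → ℝ} {φ : ℕ → ℕ} {V : ℝ}
    (hlow : Tendsto low atTop (𝓝 V)) (hlow_le : low ≤ᶠ[atTop] f) (hφ : Tendsto φ atTop atTop)
    (hup : Tendsto up atTop (𝓝 V)) (hle_up : f ∘ φ ≤ᶠ[atTop] up) : liminf f atTop = V := by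
  have hlower (a : ℝ) (ha : a < V) : ∀ᶠ n in atTop, a ≤ f n := by
    filter_upwards [hlow.eventually_const_le ha, hlow_le] with n using le_trans
  have hupper (b : ℝ) (hb : V < b) : ∃ᶠ n in atTop, f n ≤ b := by
    refine hφ.frequently (Eventually.frequently ?_)
    filter_upwards [hle_up, hup.eventually_le_const hb] with n using le_trans
  have hbdd : IsBoundedUnder (· ≥ ·) atTop f :=
    isBoundedUnder_of_eventually_ge (hlower (V - 1) (by linarith))
  have hcobdd : IsCoboundedUnder (· ≥ ·) atTop f :=
    IsCoboundedUnder.of_frequently_le (hupper (V + 1) (by linarith))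
  exact le_antisymm
    (le_of_forall_gt_imp_ge_of_dense fun b hb => liminf_le_of_frequently_le (hupper b hb) hbdd)
    (le_of_forall_lt_imp_le_of_dense fun a ha => le_liminf_of_le hcobdd (hlower a ha))

variable {g : ℕ → ℝ} {C : ℝ}

lemma le_prod_primeFactors_of_tendsto (hg : ∀ p, p.Prime → g p ∈ Set.Icc 0 1)
    (hC : Tendsto (fun N : ℕ => ∏ p ∈ N.primesLE, g p) atTop (𝓝 C)) (n : ℕ) :
    C ≤ ∏ p ∈ n.primeFactors, g p := by
  refine le_of_tendsto hC ?_
  filter_upwards [eventually_ge_atTop n] with N hN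
  refine Finset.prod_le_prod_of_subset_of_le_one (fun p hp => ?_)
    (fun p hp => (hg p (Nat.mem_primesLE.mp hp).2).1)
    fun p hp _ => (hg p (Nat.mem_primesLE.mp hp).2).2
  exact Nat.mem_primesLE.mpr
    ⟨(Nat.le_of_mem_primeFactors hp).trans hN, Nat.prime_of_mem_primeFactors hp⟩

lemma mul_mertensProduct_le_prod_primeFactors_mul_log_log
    (hg : ∀ p, p.Prime → g p ∈ Set.Icc 0 1)
    (hC : Tendsto (fun N : ℕ => ∏ p ∈ N.primesLE, g p) atTop (𝓝 C)) {n : ℕ}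
    (hn : Real.exp 1 ≤ Real.log n) :
    C * (mertensProduct ⌊Real.log n⌋₊ * (1 - 1 / Real.log (Real.log n)) *
      Real.log (Real.log n)) ≤
      (∏ p ∈ n.primeFactors, (1 - 1 / (p : ℝ)) * g p) * Real.log (Real.log n) := by
  have hloglog : 1 ≤ Real.log (Real.log n) :=
    (Real.le_log_iff_exp_le ((Real.exp_pos 1).trans_le hn)).mpr hn
  have hC0 : 0 ≤ C := ge_of_tendsto' hC fun N =>
    Finset.prod_nonneg fun p hp => (hg p (Nat.mem_primesLE.mp hp).2).1
  rw [← mul_assoc, mul_comm C, Finset.prod_mul_distrib]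
  refine mul_le_mul_of_nonneg_right ?_ (zero_le_one.trans hloglog)
  exact mul_le_mul (mertensProduct_mul_le_prod_primeFactors hn)
    (le_prod_primeFactors_of_tendsto hg hC n) hC0
    (Finset.prod_nonneg fun p _ => (one_sub_one_div_natCast_mem_Icc p).1)

lemma prod_primeFactors_primorial_mul_log_log_le (hg : ∀ p, p.Prime → g p ∈ Set.Icc 0 1) {N : ℕ}
    (hN : 2 ≤ N) :
    (∏ p ∈ (primorial N).primeFactors, (1 - 1 / (p : ℝ)) * g p) *
        Real.log (Real.log (primorial N)) ≤
      (∏ p ∈ N.primesLE, g p) *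
        (mertensProduct N * Real.log N + mertensProduct N * Real.log (Real.log 4)) := by
  rw [primeFactors_primorial, Finset.prod_mul_distrib, ← mertensProduct, ← mul_add,
    mul_left_comm, ← mul_assoc]
  refine mul_le_mul_of_nonneg_left (log_log_primorial_le hN) ?_
  exact mul_nonneg (mertensProduct_nonneg N)
    (Finset.prod_nonneg fun p hp => (hg p (Nat.mem_primesLE.mp hp).2).1)

theorem liminf_prod_primeFactors_mul_log_log (hg : ∀ p, p.Prime → g p ∈ Set.Icc 0 1)
    (hC : Tendsto (fun N : ℕ => ∏ p ∈ N.primesLE, g p) atTop (𝓝 C)) :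
    liminf (fun n : ℕ =>
        (∏ p ∈ n.primeFactors, (1 - 1 / (p : ℝ)) * g p) * Real.log (Real.log n)) atTop =
      C * Real.exp (-Real.eulerMascheroniConstant) := by
  have hlog : Tendsto (fun n : ℕ => Real.log n) atTop atTop :=
    Real.tendsto_log_atTop.comp tendsto_natCast_atTop_atTop
  have hup := hC.mul
    (tendsto_mertensProduct_mul_log.add (tendsto_mertensProduct.mul_const (Real.log (Real.log 4))))
  rw [zero_mul, add_zero] at hup
  refine liminf_eq_of_tendsto_lower_of_tendsto_upper
    ((tendsto_mertensProduct_floor_mul_log.comp hlog).const_mul C) ?_ tendsto_primorial_atTop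
    hup ?_
  · filter_upwards [hlog.eventually_ge_atTop (Real.exp 1)] with n hn
    exact mul_mertensProduct_le_prod_primeFactors_mul_log_log hg hC hn
  · filter_upwards [eventually_ge_atTop 2] with N hN
    exact prod_primeFactors_primorial_mul_log_log_le hg hN

end MinimalOrder

section OddEulerFactor

/-- The Euler factor `1 - 1 / p ^ k` of `ζ(k)⁻¹` at `p`, with the factor at `2` removed. -/
noncomputable def oddEulerFactor (k p : ℕ) : ℝ :=
  if p = 2 then 1 else 1 - 1 / (p : ℝ) ^ k

lemma oddEulerFactor_mem_Icc (k p : ℕ) : oddEulerFactor k p ∈ Set.Icc 0 1 := by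
  unfold oddEulerFactor
  split_ifs
  · exact ⟨zero_le_one, le_rfl⟩
  · exact_mod_cast one_sub_one_div_natCast_mem_Icc (p ^ k)

lemma tendsto_prod_primesLE_one_sub_one_div_pow {k : ℕ} (hk : 1 < k) :
    Tendsto (fun N : ℕ => ∏ p ∈ N.primesLE, (1 - 1 / (p : ℝ) ^ k)) atTop
      (𝓝 (∑' n : ℕ, 1 / (n : ℝ) ^ k)⁻¹) := by
  have hs : (1 : ℝ) < (k : ℝ) := by exact_mod_cast hk
  have hsum := (tendsto_sum_primesLE (f := fun p => Real.log (1 - 1 / (p : ℝ) ^ (k : ℝ)))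
    (summable_log_one_sub_one_div_primes_rpow hs)).rexp
  have hpos : 0 < ∑' n : ℕ, 1 / (n : ℝ) ^ k :=
    (Real.summable_one_div_nat_pow.mpr hk).tsum_pos (fun n => by positivity) 1 (by simp)
  rw [← neg_neg (tsum _), ← log_tsum_one_div_rpow hs, Real.exp_neg] at hsum
  simp only [Real.rpow_natCast] at hsum
  rw [Real.exp_log hpos] at hsum
  refine hsum.congr fun N => ?_
  rw [Real.exp_sum]
  refine Finset.prod_congr rfl fun p hp => Real.exp_log ?_
  have h := one_div_primes_rpow_le_half ⟨p, (Nat.mem_primesLE.mp hp).2⟩ hs.le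
  rw [Real.rpow_natCast] at h
  linarith

lemma prod_primesLE_oddEulerFactor {k : ℕ} (hk : k ≠ 0) {N : ℕ} (hN : 2 ≤ N) :
    ∏ p ∈ N.primesLE, oddEulerFactor k p =
      (2 : ℝ) ^ k / (2 ^ k - 1) * ∏ p ∈ N.primesLE, (1 - 1 / (p : ℝ) ^ k) := by
  have h2 : 2 ∈ N.primesLE := Nat.mem_primesLE.mpr ⟨hN, Nat.prime_two⟩
  have hpow : (2 : ℝ) ^ k - 1 ≠ 0 :=
    (sub_pos.mpr (one_lt_pow₀ one_lt_two hk)).ne'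
  have hodd : ∏ p ∈ N.primesLE.erase 2, oddEulerFactor k p =
      ∏ p ∈ N.primesLE.erase 2, (1 - 1 / (p : ℝ) ^ k) :=
    Finset.prod_congr rfl fun p hp => if_neg (Finset.ne_of_mem_erase hp)
  rw [← Finset.mul_prod_erase _ _ h2, ← Finset.mul_prod_erase _ _ h2, hodd, ← mul_assoc,
    oddEulerFactor, if_pos rfl]
  congr 1
  push_cast
  field_simp

theorem tendsto_prod_primesLE_oddEulerFactor {k : ℕ} (hk : 1 < k) :
    Tendsto (fun N : ℕ => ∏ p ∈ N.primesLE, oddEulerFactor k p) atTop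
      (𝓝 ((2 : ℝ) ^ k / (2 ^ k - 1) * (∑' n : ℕ, 1 / (n : ℝ) ^ k)⁻¹)) := by
  refine ((tendsto_prod_primesLE_one_sub_one_div_pow hk).const_mul _).congr' ?_
  filter_upwards [eventually_ge_atTop 2] with N hN
  exact (prod_primesLE_oddEulerFactor (by omega) hN).symm

lemma unitSumSqDensity_zmod_prime {m p : ℕ} (hm : 0 < m) (hp : p.Prime) :
    unitSumSqDensity (Fin (4 * m)) (ZMod p) =
      (1 - 1 / (p : ℝ)) * oddEulerFactor (2 * m) p := by
  have : Fact p.Prime := ⟨hp⟩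
  rcases eq_or_ne p 2 with rfl | hp2
  · have : NeZero (4 * m) := ⟨by omega⟩
    rw [unitSumSqDensity_of_charTwo, Nat.card_zmod, oddEulerFactor, if_pos rfl, mul_one]
  · rw [unitSumSqDensity_of_two_ne_zero (Ring.two_ne_zero (by rwa [ZMod.ringChar_zmod_n]))
      (Fintype.card_fin _), Nat.card_zmod, oddEulerFactor, if_neg hp2]

theorem genTotient_div_pow_eq_prod {m n : ℕ} (hm : 0 < m) (hn : n ≠ 0) :
    (genTotient (4 * m) n : ℝ) / (n : ℝ) ^ (4 * m) =
      ∏ p ∈ n.primeFactors, (1 - 1 / (p : ℝ)) * oddEulerFactor (2 * m) p := by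
  rw [genTotient_div_pow, unitSumSqDensity_zmod_eq_prod hn]
  exact Finset.prod_congr rfl fun p hp =>
    unitSumSqDensity_zmod_prime hm (Nat.prime_of_mem_primeFactors hp)

end OddEulerFactor

/-- Theorem 7 (keven, case `k ≡ 0 mod 4`): the minimal order of `Φ_k(n)` is
`(2^{k/2}/(2^{k/2}-1)) ζ(k/2)^{-1} e^{-γ} n^k / log log n`. -/
theorem minimal_order_zero_mod_four (k : ℕ) (hk : 4 ≤ k) (hmod : k % 4 = 0) :
    (↑(Filter.liminf
        (fun n : ℕ => (genTotient k n : ℝ) * Real.log (Real.log n) / (n : ℝ) ^ k)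
        Filter.atTop : ℝ) : ℂ) =
      (2 : ℂ) ^ (k / 2) / ((2 : ℂ) ^ (k / 2) - 1) * (riemannZeta (k / 2))⁻¹ *
        (Real.exp (-Real.eulerMascheroniConstant) : ℝ) := by
  obtain ⟨m, rfl⟩ : 4 ∣ k := Nat.dvd_of_mod_eq_zero hmod
  have hm : 0 < m := by omega
  have hdensity : (fun n : ℕ =>
      (genTotient (4 * m) n : ℝ) * Real.log (Real.log n) / (n : ℝ) ^ (4 * m)) =ᶠ[atTop] fun n =>
        (∏ p ∈ n.primeFactors, (1 - 1 / (p : ℝ)) * oddEulerFactor (2 * m) p) *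
          Real.log (Real.log n) := by
    filter_upwards [eventually_ne_atTop 0] with n hn
    rw [mul_div_right_comm, genTotient_div_pow_eq_prod hm hn]
  have hexp : 4 * m / 2 = 2 * m := by omega
  have hzeta : riemannZeta ((4 * m : ℕ) / 2) = ((∑' n : ℕ, 1 / (n : ℝ) ^ (2 * m) : ℝ) : ℂ) := by
    have hcast : ((4 * m : ℕ) : ℂ) / 2 = (2 * m : ℕ) := by push_cast; ring
    rw [hcast, zeta_nat_eq_tsum_of_gt_one (by omega)]
    push_cast
    rfl
  rw [liminf_congr hdensity, liminf_prod_primeFactors_mul_log_log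
    (fun p _ => oddEulerFactor_mem_Icc _ p) (tendsto_prod_primesLE_oddEulerFactor (by omega)),
    hexp, hzeta]
  push_cast
  rfl
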